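/- Let n ≥ 1, d ∈ ℝ^n with d > 0 entrywise, and σ, τ ∈ S_n. Then the matrix A_{στ} is an extreme point of the convex set s_d(n) of d-stochastic matrices (in particular A_{στ} is itself d-stochastic). -/

import Mathlib

open Finset

noncomputable def th {n : ℕ} (d y : Fin n → ℝ) (c : ℝ) : ℝ :=
  sInf ((fun i => (∑ j, max (y j - y i / d i * d j) 0) + y i / d i * c) ''
    {i : Fin n | 0 < d i})

noncomputable def psum {n : ℕ} (d : Fin n → ℝ) (σ : Equiv.Perm (Fin n)) (j : ℕ) : ℝ :=
  ∑ i ∈ Finset.univ.filter (fun i : Fin n => (i : ℕ) < j), d (σ i)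

noncomputable def Emap {n : ℕ} (d y : Fin n → ℝ) (σ : Equiv.Perm (Fin n)) : Fin n → ℝ :=
  fun k => th d y (psum d σ ((σ.symm k : ℕ) + 1)) - th d y (psum d σ (σ.symm k : ℕ))

def dStoch {n : ℕ} (d : Fin n → ℝ) (A : Matrix (Fin n) (Fin n) ℝ) : Prop :=
  (∀ i j, 0 ≤ A i j) ∧ (∀ j, ∑ i, A i j = 1) ∧ A.mulVec d = d

def Mset {n : ℕ} (d y : Fin n → ℝ) : Set (Fin n → ℝ) :=
  {x | ∃ A : Matrix (Fin n) (Fin n) ℝ, dStoch d A ∧ A.mulVec y = x}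

noncomputable def Aentry {n : ℕ} (d : Fin n → ℝ) (σ τ : Equiv.Perm (Fin n))
    (α : ℕ → Fin n) (j k : Fin n) : ℝ :=
  if k = α j.val ∧ (α j.val).val < (α (j.val + 1)).val then
    (psum d τ ((α j.val).val + 1) - psum d σ j.val) / d (τ (α j.val))
  else if (α j.val).val < k.val ∧ k.val < (α (j.val + 1)).val then 1
  else if (α j.val).val < (α (j.val + 1)).val ∧ k = α (j.val + 1) then
    (psum d σ (j.val + 1) - psum d τ (α (j.val + 1)).val) / d (τ (α (j.val + 1)))
  else if α j.val = α (j.val + 1) ∧ k = α (j.val + 1) then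
    d (σ j) / d (τ (α (j.val + 1)))
  else 0

noncomputable def Amat {n : ℕ} (d : Fin n → ℝ) (σ τ : Equiv.Perm (Fin n))
    (α : ℕ → Fin n) : Matrix (Fin n) (Fin n) ℝ :=
  Matrix.of fun p q => Aentry d σ τ α (σ.symm p) (τ.symm q)

/-!
Cut the interval `[0, ∑ d]` into pieces of lengths `d (σ 0), d (σ 1), …` and, independently, into
pieces of lengths `d (τ 0), d (τ 1), …`. Up to the scaling of column `τ k` by `d (τ k)`, the matrix
`Amat` records the lengths of the pairwise intersections of the pieces, which is the north-west
corner solution of a transportation problem; summing these lengths along a row or a column recovers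
the length of one piece, so `Amat` is `d`-stochastic. If it is a proper convex combination of
`d`-stochastic matrices, these vanish wherever it does, in particular outside a staircase-shaped
region. A matrix supported there is determined by its row and column sums: every north-west
rectangle contains either the whole supports of the rows it meets or the whole supports of the
columns it meets, so that its total sum is determined.
-/

section Overlap

variable {R : Type*} [AddCommGroup R] [LinearOrder R]

/-- The length of the intersection of the intervals `[a, b]` and `[u, v]`, equal to `0` when they
are disjoint. The entries of `Amat` are overlaps of the two grids of partial sums of `d`. -/
def overlap (a b u v : R) : R :=
  max 0 (min b v - max a u)

lemma overlap_comm (a b u v : R) : overlap a b u v = overlap u v a b := by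
  rw [overlap, overlap, min_comm, max_comm a]

lemma overlap_nonneg (a b u v : R) : 0 ≤ overlap a b u v :=
  le_max_left _ _

variable [IsOrderedAddMonoid R] {a b u v : R}

lemma overlap_of_le (h : b ≤ u) : overlap a b u v = 0 :=
  max_eq_left <| sub_nonpos.mpr <| (min_le_left b v).trans <| h.trans <| le_max_right a u

lemma overlap_of_nested (hau : a ≤ u) (huv : u ≤ v) (hvb : v ≤ b) :
    overlap a b u v = v - u := by
  rw [overlap, min_eq_right hvb, max_eq_right hau, max_eq_right (sub_nonneg.mpr huv)]

lemma overlap_of_staggered (hua : u ≤ a) (hav : a ≤ v) (hvb : v ≤ b) :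
    overlap a b u v = v - a := by
  rw [overlap, min_eq_right hvb, max_eq_left hua, max_eq_right (sub_nonneg.mpr hav)]

lemma overlap_eq_clamp_sub_clamp (hab : a ≤ b) (huv : u ≤ v) :
    overlap a b u v = max a (min b v) - max a (min b u) := by
  grind [overlap]

lemma sum_range_overlap {T : ℕ → R} (hT : Monotone T) {n : ℕ} (hab : a ≤ b) (h0 : T 0 ≤ a)
    (hn : b ≤ T n) : ∑ k ∈ range n, overlap a b (T k) (T (k + 1)) = b - a := by
  have telescope : ∑ k ∈ range n, overlap a b (T k) (T (k + 1)) =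
      max a (min b (T n)) - max a (min b (T 0)) := by
    simp only [overlap_eq_clamp_sub_clamp hab (hT (Nat.le_succ _))]
    exact sum_range_sub (fun k => max a (min b (T k))) n
  rw [telescope, min_eq_left hn, max_eq_right hab, min_eq_right (h0.trans hab), max_eq_left h0]

end Overlap

lemma sum_filter_val_lt_succ {M : Type*} [AddCommMonoid M] {n : ℕ} (f : Fin n → M) (j : Fin n) :
    ∑ i with i.val < j.val + 1, f i = ∑ i with i.val < j.val, f i + f j := by
  have insert_eq : univ.filter (fun i : Fin n => i.val < j.val + 1) =
      insert j (univ.filter fun i : Fin n => i.val < j.val) := by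
    ext i
    simp only [mem_filter_univ, mem_insert, Fin.ext_iff]
    omega
  rw [insert_eq, sum_insert (by simp), add_comm]

section Staircase

/-- The `j`-th interval of the grid `S` and the `k`-th interval of the grid `T` do not overlap. For
monotone grids the remaining positions `(j, k)` form a staircase. -/
def OffStaircase {R : Type*} [LE R] (S T : ℕ → R) (j k : ℕ) : Prop :=
  S (j + 1) ≤ T k ∨ T (k + 1) ≤ S j

variable {R M : Type*} [LinearOrder R] [AddCommMonoid M] {m n : ℕ} {S T : ℕ → R}
  {c : Fin m → Fin n → M}

lemma sum_rectangle_eq_zero_of_staircase (hS : Monotone S) (hT : Monotone T)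
    (hrow : ∀ i, ∑ l, c i l = 0) (hcol : ∀ l, ∑ i, c i l = 0)
    (hc : ∀ (i : Fin m) (l : Fin n), OffStaircase S T i l → c i l = 0) (a b : ℕ) :
    ∑ i with i.val < a, ∑ l with l.val < b, c i l = 0 := by
  rcases le_total (S a) (T b) with hab | hba
  · refine sum_eq_zero fun i hi => ?_
    rw [← hrow i]
    refine sum_subset (filter_subset _ _) fun l _ hl => hc i l (Or.inl ?_)
    rw [mem_filter_univ] at hi hl
    exact (hS hi).trans (hab.trans (hT (not_lt.mp hl)))
  · rw [sum_comm]
    refine sum_eq_zero fun l hl => ?_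
    rw [← hcol l]
    refine sum_subset (filter_subset _ _) fun i _ hi => hc i l (Or.inr ?_)
    rw [mem_filter_univ] at hi hl
    exact (hT hl).trans (hba.trans (hS (not_lt.mp hi)))

lemma eq_zero_of_staircase (hS : Monotone S) (hT : Monotone T)
    (hrow : ∀ i, ∑ l, c i l = 0) (hcol : ∀ l, ∑ i, c i l = 0)
    (hc : ∀ (i : Fin m) (l : Fin n), OffStaircase S T i l → c i l = 0) (i : Fin m) (l : Fin n) :
    c i l = 0 := by
  have rectangle := sum_rectangle_eq_zero_of_staircase hS hT hrow hcol hc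
  have row_segment (b : ℕ) : ∑ k with k.val < b, c i k = 0 := by
    rw [← rectangle (i.val + 1) b, sum_filter_val_lt_succ, rectangle, zero_add]
  rw [← row_segment (l.val + 1), sum_filter_val_lt_succ, row_segment, zero_add]

end Staircase

lemma mem_extremePoints_of_forall_support {m n 𝕜 : Type*} [Semiring 𝕜] [PartialOrder 𝕜]
    [IsStrictOrderedRing 𝕜] {s : Set (Matrix m n 𝕜)} {A : Matrix m n 𝕜}
    (hs : ∀ B ∈ s, ∀ i j, 0 ≤ B i j) (hA : A ∈ s)
    (h : ∀ B ∈ s, (∀ i j, A i j = 0 → B i j = 0) → B = A) : A ∈ s.extremePoints 𝕜 := by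
  refine mem_extremePoints_iff_left.mpr ⟨hA, ?_⟩
  rintro B hB C hC ⟨a, b, a_pos, b_pos, -, rfl⟩
  refine h B hB fun i j hij => ?_
  have aB_zero : a * B i j = 0 :=
    ((add_eq_zero_iff_of_nonneg (mul_nonneg a_pos.le (hs B hB i j))
      (mul_nonneg b_pos.le (hs C hC i j))).mp hij).1
  by_contra hBij
  exact (mul_pos a_pos ((hs B hB i j).lt_of_ne' hBij)).ne' aB_zero

section PartialSums

variable {n : ℕ} {d : Fin n → ℝ}

lemma psum_zero (d : Fin n → ℝ) (σ : Equiv.Perm (Fin n)) : psum d σ 0 = 0 := by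
  simp [psum]

lemma psum_self (d : Fin n → ℝ) (σ : Equiv.Perm (Fin n)) : psum d σ n = ∑ i, d i := by
  rw [psum, filter_true_of_mem fun i _ => i.isLt, Equiv.sum_comp σ d]

lemma psum_succ (d : Fin n → ℝ) (σ : Equiv.Perm (Fin n)) (j : Fin n) :
    psum d σ (j.val + 1) = psum d σ j + d (σ j) :=
  sum_filter_val_lt_succ (fun i => d (σ i)) j

lemma psum_monotone (hd : ∀ i, 0 ≤ d i) (σ : Equiv.Perm (Fin n)) : Monotone (psum d σ) :=
  fun _ _ hab => sum_le_sum_of_subset_of_nonneg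
    (monotone_filter_right _ fun _ _ hi => lt_of_lt_of_le hi hab) fun _ _ _ => hd _

lemma sum_overlap_psum (hd : ∀ i, 0 ≤ d i) (σ τ : Equiv.Perm (Fin n)) (j : Fin n) :
    ∑ k : Fin n, overlap (psum d σ j) (psum d σ (j.val + 1)) (psum d τ k) (psum d τ (k.val + 1)) =
      d (σ j) := by
  have hσ := psum_monotone hd σ
  rw [Fin.sum_univ_eq_sum_range (fun k => overlap _ _ (psum d τ k) (psum d τ (k + 1))),
    sum_range_overlap (psum_monotone hd τ) (hσ (Nat.le_succ _)), psum_succ, add_sub_cancel_left]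
  · rw [psum_zero, ← psum_zero d σ]
    exact hσ (Nat.zero_le _)
  · rw [psum_self, ← psum_self d σ]
    exact hσ j.isLt

end PartialSums

namespace dStoch

variable {n : ℕ} {d : Fin n → ℝ} {A B : Matrix (Fin n) (Fin n) ℝ}

lemma sum_apply_perm (hA : dStoch d A) (σ : Equiv.Perm (Fin n)) (k : Fin n) :
    ∑ j, A (σ j) k = 1 := by
  rw [Equiv.sum_comp σ fun j => A j k, hA.2.1]

lemma sum_apply_perm_mul (hA : dStoch d A) (τ : Equiv.Perm (Fin n)) (j : Fin n) :
    ∑ k, A j (τ k) * d (τ k) = d j := by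
  rw [Equiv.sum_comp τ fun k => A j k * d k]
  exact congrFun hA.2.2 j

lemma eq_of_staircase (hd : ∀ i, d i ≠ 0) (hA : dStoch d A) (hB : dStoch d B)
    (σ τ : Equiv.Perm (Fin n)) {R : Type*} [LinearOrder R] {S T : ℕ → R} (hS : Monotone S)
    (hT : Monotone T)
    (hA_zero : ∀ j k : Fin n, OffStaircase S T j k → A (σ j) (τ k) = 0)
    (hB_zero : ∀ j k : Fin n, OffStaircase S T j k → B (σ j) (τ k) = 0) :
    A = B := by
  have weighted_sub_eq_zero (j k : Fin n) :
      A (σ j) (τ k) * d (τ k) - B (σ j) (τ k) * d (τ k) = 0 := by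
    refine eq_zero_of_staircase
      (c := fun j k => A (σ j) (τ k) * d (τ k) - B (σ j) (τ k) * d (τ k)) hS hT
      (fun j => ?_) (fun k => ?_) (fun j k hjk => ?_) j k
    · rw [sum_sub_distrib, hA.sum_apply_perm_mul, hB.sum_apply_perm_mul, sub_self]
    · rw [sum_sub_distrib, ← sum_mul, ← sum_mul, hA.sum_apply_perm, hB.sum_apply_perm, sub_self]
    · rw [hA_zero j k hjk, hB_zero j k hjk, sub_self]
  ext p q
  simpa only [Equiv.apply_symm_apply] using
    mul_right_cancel₀ (hd _) (sub_eq_zero.mp (weighted_sub_eq_zero (σ.symm p) (τ.symm q)))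

end dStoch

section NorthwestCorner

variable {n : ℕ} {d : Fin n → ℝ} {σ τ : Equiv.Perm (Fin n)} {α : ℕ → Fin n}

lemma psum_mem_Icc_of_interior (hd : ∀ i, 0 ≤ d i) (hα0 : (α 0).val = 0)
    (hαn : (α n).val = n - 1)
    (hα : ∀ j : ℕ, 1 ≤ j → j ≤ n - 1 →
      psum d σ j ∈ Set.Icc (psum d τ (α j)) (psum d τ ((α j).val + 1))) (j : ℕ) (hj : j ≤ n) :
    psum d σ j ∈ Set.Icc (psum d τ (α j)) (psum d τ ((α j).val + 1)) := by
  have hτ := psum_monotone hd τ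
  rcases Nat.eq_zero_or_pos j with rfl | j_pos
  · rw [hα0, psum_zero d σ, ← psum_zero d τ]
    exact ⟨le_rfl, hτ (Nat.zero_le _)⟩
  rcases hj.eq_or_lt with rfl | j_lt
  · rw [hαn, Nat.sub_add_cancel j_pos, psum_self d σ, ← psum_self d τ]
    exact ⟨hτ (Nat.sub_le _ _), le_rfl⟩
  · exact hα j j_pos (Nat.le_sub_one_of_lt j_lt)

lemma Aentry_mul_eq_overlap (hd : ∀ i, 0 < d i)
    (hα : ∀ j ≤ n, psum d σ j ∈ Set.Icc (psum d τ (α j)) (psum d τ ((α j).val + 1)))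
    (j k : Fin n) :
    Aentry d σ τ α j k * d (τ k) =
      overlap (psum d σ j) (psum d σ (j.val + 1)) (psum d τ k) (psum d τ (k.val + 1)) := by
  have hσ : psum d σ j < psum d σ (j.val + 1) := by
    rw [psum_succ]
    exact lt_add_of_pos_right _ (hd _)
  have hτ := psum_monotone (fun i => (hd i).le) τ
  have hdk := (hd (τ k)).ne'
  obtain ⟨lower, upper⟩ := hα j j.isLt.le
  obtain ⟨lower', upper'⟩ := hα (j.val + 1) j.isLt
  have α_le : (α j).val ≤ (α (j.val + 1)).val :=
    Nat.lt_succ_iff.mp (hτ.reflect_lt (lower.trans_lt (hσ.trans_le upper')))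
  unfold Aentry
  split_ifs with first middle last single
  · obtain ⟨rfl, hlt⟩ := first
    rw [div_mul_cancel₀ _ hdk, overlap_of_staggered lower upper ((hτ hlt).trans lower')]
  · have left : psum d σ j ≤ psum d τ k := upper.trans (hτ middle.1)
    have right : psum d τ (k.val + 1) ≤ psum d σ (j.val + 1) := (hτ middle.2).trans lower'
    rw [one_mul, overlap_of_nested left (hτ (Nat.le_succ _)) right, psum_succ,
      add_sub_cancel_left]
  · obtain ⟨hlt, rfl⟩ := last
    rw [div_mul_cancel₀ _ hdk, overlap_comm,
      overlap_of_staggered (upper.trans (hτ hlt)) lower' upper']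
  · obtain ⟨heq, rfl⟩ := single
    rw [heq] at lower
    rw [div_mul_cancel₀ _ hdk, overlap_comm, overlap_of_nested lower hσ.le upper', psum_succ,
      add_sub_cancel_left]
  · have outside : k.val < (α j).val ∨ (α (j.val + 1)).val < k.val := by
      simp only [Fin.ext_iff] at first last single
      omega
    rw [zero_mul]
    rcases outside with before | after
    · rw [overlap_comm, overlap_of_le ((hτ before).trans lower)]
    · rw [overlap_of_le (upper'.trans (hτ after))]

lemma Aentry_eq_zero_of_offStaircase (hd : ∀ i, 0 < d i)
    (hα : ∀ j ≤ n, psum d σ j ∈ Set.Icc (psum d τ (α j)) (psum d τ ((α j).val + 1)))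
    {j k : Fin n} (hjk : OffStaircase (psum d σ) (psum d τ) j k) :
    Aentry d σ τ α j k = 0 := by
  refine (mul_eq_zero_iff_right (hd (τ k)).ne').mp ?_
  rw [Aentry_mul_eq_overlap hd hα]
  rcases hjk with hjk | hjk
  · exact overlap_of_le hjk
  · rw [overlap_comm, overlap_of_le hjk]

lemma dStoch_Amat (hd : ∀ i, 0 < d i)
    (hα : ∀ j ≤ n, psum d σ j ∈ Set.Icc (psum d τ (α j)) (psum d τ ((α j).val + 1))) :
    dStoch d (Amat d σ τ α) := by
  have hd_nonneg : ∀ i, 0 ≤ d i := fun i => (hd i).le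
  refine ⟨fun p q => ?nonneg, fun q => ?column, funext fun p => ?row⟩
  case nonneg =>
    refine nonneg_of_mul_nonneg_left (b := d (τ (τ.symm q))) ?_ (hd _)
    exact (overlap_nonneg _ _ _ _).trans_eq (Aentry_mul_eq_overlap hd hα _ _).symm
  case column =>
    have column_sum (k : Fin n) : ∑ j, Aentry d σ τ α j k = 1 := by
      refine mul_right_cancel₀ (hd (τ k)).ne' ?_
      simp only [sum_mul, Aentry_mul_eq_overlap hd hα, overlap_comm (psum d σ _),
        sum_overlap_psum hd_nonneg, one_mul]
    exact (Equiv.sum_comp σ.symm fun j => Aentry d σ τ α j (τ.symm q)).trans (column_sum _)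
  case row =>
    calc ∑ q, Aentry d σ τ α (σ.symm p) (τ.symm q) * d q
        = ∑ k, Aentry d σ τ α (σ.symm p) k * d (τ k) := by
          rw [← Equiv.sum_comp τ]
          simp only [Equiv.symm_apply_apply]
      _ = d p := by
          simp only [Aentry_mul_eq_overlap hd hα, sum_overlap_psum hd_nonneg,
            Equiv.apply_symm_apply]

end NorthwestCorner

/-- The β-permutation matrix A_{στ} is an extreme point of the set of
d-stochastic matrices. Here α : ℕ → Fin n is the (0-indexed version of the)
index sequence from the definition of A_{στ}. -/
theorem stmt5 (n : ℕ) (hn : 1 ≤ n) (d : Fin n → ℝ) (hd : ∀ i, 0 < d i)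
    (σ τ : Equiv.Perm (Fin n)) (α : ℕ → Fin n)
    (hα0 : (α 0).val = 0) (hαn : (α n).val = n - 1)
    (hα : ∀ j : ℕ, 1 ≤ j → j ≤ n - 1 →
      psum d τ (α j).val < psum d σ j ∧ psum d σ j ≤ psum d τ ((α j).val + 1)) :
    Amat d σ τ α ∈
      Set.extremePoints ℝ {A : Matrix (Fin n) (Fin n) ℝ | dStoch d A} := by
  have hd_nonneg : ∀ i, 0 ≤ d i := fun i => (hd i).le
  have bracket := psum_mem_Icc_of_interior hd_nonneg hα0 hαn
    fun j h1 hj => Set.Ioc_subset_Icc_self (hα j h1 hj)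
  have hA := dStoch_Amat hd bracket
  have hA_zero (j k : Fin n) (hjk : OffStaircase (psum d σ) (psum d τ) j k) :
      Amat d σ τ α (σ j) (τ k) = 0 := by
    simpa [Amat] using Aentry_eq_zero_of_offStaircase hd bracket hjk
  refine mem_extremePoints_of_forall_support (fun B hB => hB.1) hA fun B hB hBA => ?_
  exact hB.eq_of_staircase (fun i => (hd i).ne') hA σ τ (psum_monotone hd_nonneg σ)
    (psum_monotone hd_nonneg τ) (fun j k hjk => hBA _ _ (hA_zero j k hjk)) hA_zero
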